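/- arXiv:2207.07974 — 10 statements merged into one kernel-verified Lean document; each statement's English description precedes it below -/
import Mathlib

section
/- For every learning rate η > 0, the multiplicative weights update distributions satisfy ∑_{t=1}^{T} ∑_{i=1}^{n} p_t(i)·ℓ_t(i) ≤ min_{i*∈{1,…,n}} ∑_{t=1}^{T} ℓ_t(i*) + (log n)/η + η·T. -/
/-!
The potential `log ∑ i, exp (-η * L i)` of the cumulative losses `L` changes in each round by
exactly the cumulant-generating function, at `-η`, of the loss of an expert drawn from the Hedge
distribution. By Hoeffding's lemma this is at most `-η` times the expected loss plus
`η ^ 2 * (b - a) ^ 2 / 8` when the losses of the round lie in `[a, b]`. The changes telescope, from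
the logarithm of the number of experts to at least `-η` times the total loss of any one expert, and
dividing by `η` gives the regret bound.
-/

open Finset Real

theorem sum_filter_lt_add_sub {κ M N : Type*} [LinearOrder κ] [AddCommMonoid M] [AddCommGroup N]
    (F : M → N) (x : κ → M) (s : Finset κ) :
    ∑ t ∈ s, (F ((∑ τ ∈ s with τ < t, x τ) + x t) - F (∑ τ ∈ s with τ < t, x τ)) =
      F (∑ t ∈ s, x t) - F 0 := by
  induction s using Finset.induction_on_max with
  | empty => simp
  | insert m s hm ih =>
    have hms : m ∉ s := fun h => lt_irrefl m (hm m h)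
    have filter_lt_max : {τ ∈ insert m s | τ < m} = s := by
      rw [filter_insert, if_neg (lt_irrefl m), filter_true_of_mem hm]
    have filter_lt_of_mem : ∀ t ∈ s, {τ ∈ insert m s | τ < t} = {τ ∈ s | τ < t} := fun t ht => by
      rw [filter_insert, if_neg (hm t ht).not_gt]
    calc ∑ t ∈ insert m s, (F ((∑ τ ∈ insert m s with τ < t, x τ) + x t) -
          F (∑ τ ∈ insert m s with τ < t, x τ))
        = F ((∑ t ∈ s, x t) + x m) - F (∑ t ∈ s, x t) + (F (∑ t ∈ s, x t) - F 0) := by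
          rw [sum_insert hms, filter_lt_max, ← ih]
          congr 1
          exact sum_congr rfl fun t ht => by rw [filter_lt_of_mem t ht]
      _ = F (∑ t ∈ insert m s, x t) - F 0 := by
          rw [sub_add_sub_cancel, sum_insert hms, add_comm (x m)]

variable {ι : Type*} [Fintype ι]

theorem sum_mul_exp_le_of_mem_stdSimplex {w : ι → ℝ} (hw : w ∈ stdSimplex ℝ ι) {x : ι → ℝ}
    {a b : ℝ} (hx : ∀ i, x i ∈ Set.Icc a b) (c : ℝ) :
    ∑ i, w i * exp (c * x i) ≤ exp (c * ∑ i, w i * x i + c ^ 2 * (b - a) ^ 2 / 8) := by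
  let _ : MeasurableSpace ι := ⊤
  let P : PMF ι := PMF.ofFintype (fun i => ENNReal.ofReal (w i)) <| by
    rw [← ENNReal.ofReal_sum_of_nonneg fun i _ => hw.1 i, hw.2, ENNReal.ofReal_one]
  have integral_eq (f : ι → ℝ) : ∫ i, f i ∂P.toMeasure = ∑ i, w i * f i := by
    simp [PMF.integral_eq_sum, P, hw.1]
  have hoeffding := (ProbabilityTheory.hasSubgaussianMGF_of_mem_Icc (μ := P.toMeasure)
    (measurable_from_top (f := x)).aemeasurable (.of_forall hx)).mgf_le c
  simp only [ProbabilityTheory.mgf, integral_eq] at hoeffding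
  set m := ∑ i, w i * x i
  calc ∑ i, w i * exp (c * x i)
      = exp (c * m) * ∑ i, w i * exp (c * (x i - m)) := by
        rw [mul_sum]
        refine sum_congr rfl fun i _ => ?_
        rw [mul_left_comm, ← exp_add]
        ring_nf
    _ ≤ exp (c * m) * exp (((‖b - a‖₊ / 2) ^ 2 : NNReal) * c ^ 2 / 2) := by gcongr
    _ = exp (c * m + c ^ 2 * (b - a) ^ 2 / 8) := by
        rw [← exp_add, NNReal.coe_pow, NNReal.coe_div, coe_nnnorm, div_pow, norm_eq_abs, sq_abs,
          NNReal.coe_ofNat]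
        ring_nf

/-- The weight that Hedge with learning rate `η` gives to expert `i` when the cumulative losses of
the experts are `L`. -/
noncomputable def hedgeWeight (η : ℝ) (L : ι → ℝ) (i : ι) : ℝ :=
  exp (-η * L i) / ∑ j, exp (-η * L j)

/-- The log-partition function of the Hedge weights, used as a potential in the regret analysis. It
is not divided by `-η`, so for `η > 0` it decreases as losses accumulate. -/
noncomputable def hedgePotential (η : ℝ) (L : ι → ℝ) : ℝ :=
  log (∑ i, exp (-η * L i))

theorem hedgePotential_zero (η : ℝ) : hedgePotential η (0 : ι → ℝ) = log (Fintype.card ι) := by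
  simp [hedgePotential]

theorem neg_mul_le_hedgePotential (η : ℝ) (L : ι → ℝ) (i : ι) : -η * L i ≤ hedgePotential η L :=
  calc -η * L i = log (exp (-η * L i)) := (log_exp _).symm
    _ ≤ hedgePotential η L := log_le_log (exp_pos _) <|
        single_le_sum (f := fun i => exp (-η * L i)) (fun _ _ => (exp_pos _).le) (mem_univ i)

section Nonempty

variable [Nonempty ι]

theorem sum_exp_neg_mul_pos (η : ℝ) (L : ι → ℝ) : 0 < ∑ i, exp (-η * L i) :=
  sum_pos (fun _ _ => exp_pos _) univ_nonempty

theorem hedgeWeight_mem_stdSimplex (η : ℝ) (L : ι → ℝ) : hedgeWeight η L ∈ stdSimplex ℝ ι := by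
  refine ⟨fun i => div_nonneg (exp_pos _).le (sum_exp_neg_mul_pos η L).le, ?_⟩
  simp only [hedgeWeight]
  rw [← sum_div, div_self (sum_exp_neg_mul_pos η L).ne']

theorem hedgePotential_add_sub (η : ℝ) (L l : ι → ℝ) :
    hedgePotential η (L + l) - hedgePotential η L =
      log (∑ i, hedgeWeight η L i * exp (-η * l i)) := by
  rw [hedgePotential, hedgePotential,
    ← log_div (sum_exp_neg_mul_pos η _).ne' (sum_exp_neg_mul_pos η L).ne', sum_div]
  simp only [hedgeWeight, Pi.add_apply, mul_add, exp_add, div_mul_eq_mul_div]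

theorem hedgePotential_add_sub_le (η : ℝ) (L : ι → ℝ) {l : ι → ℝ} {a b : ℝ}
    (hl : ∀ i, l i ∈ Set.Icc a b) :
    hedgePotential η (L + l) - hedgePotential η L ≤
      -η * ∑ i, hedgeWeight η L i * l i + η ^ 2 * (b - a) ^ 2 / 8 := by
  have mgf_pos : 0 < ∑ i, hedgeWeight η L i * exp (-η * l i) :=
    sum_pos (fun i _ => mul_pos (div_pos (exp_pos _) (sum_exp_neg_mul_pos η L)) (exp_pos _))
      univ_nonempty
  rw [hedgePotential_add_sub, log_le_iff_le_exp mgf_pos, ← neg_sq η]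
  exact sum_mul_exp_le_of_mem_stdSimplex (hedgeWeight_mem_stdSimplex η L) hl (-η)

end Nonempty

theorem mwu_regret_bound_general {κ : Type*} [Fintype κ] [LinearOrder κ] {η : ℝ} (hη : 0 < η)
    {ℓ : κ → ι → ℝ} {a b : κ → ℝ} (hℓ : ∀ t i, ℓ t i ∈ Set.Icc (a t) (b t)) (k : ι) :
    ∑ t, ∑ i, hedgeWeight η (∑ τ with τ < t, ℓ τ) i * ℓ t i ≤
      ∑ t, ℓ t k + log (Fintype.card ι) / η + η * ∑ t, (b t - a t) ^ 2 / 8 := by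
  have : Nonempty ι := ⟨k⟩
  set A := ∑ t, ∑ i, hedgeWeight η (∑ τ with τ < t, ℓ τ) i * ℓ t i
  have potential_change_le : -η * ∑ t, ℓ t k - log (Fintype.card ι) ≤
      -η * A + η ^ 2 * ∑ t, (b t - a t) ^ 2 / 8 :=
    calc -η * ∑ t, ℓ t k - log (Fintype.card ι)
        ≤ hedgePotential η (∑ t, ℓ t) - hedgePotential η 0 := by
          rw [hedgePotential_zero, ← Finset.sum_apply]
          gcongr
          exact neg_mul_le_hedgePotential η _ k
      _ = ∑ t, (hedgePotential η ((∑ τ with τ < t, ℓ τ) + ℓ t) -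
            hedgePotential η (∑ τ with τ < t, ℓ τ)) := (sum_filter_lt_add_sub _ ℓ univ).symm
      _ ≤ ∑ t, (-η * ∑ i, hedgeWeight η (∑ τ with τ < t, ℓ τ) i * ℓ t i +
            η ^ 2 * (b t - a t) ^ 2 / 8) :=
          sum_le_sum fun t _ => hedgePotential_add_sub_le η _ (hℓ t)
      _ = -η * A + η ^ 2 * ∑ t, (b t - a t) ^ 2 / 8 := by
          simp only [sum_add_distrib, mul_sum, mul_div_assoc, A]
  refine le_of_mul_le_mul_left ?_ hη
  rw [mul_add, mul_add, mul_div_cancel₀ _ hη.ne']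
  linarith

/-- **MWU regret bound (Lemma 2.3, first part).**
For every learning rate `η > 0`, the multiplicative weights update (Hedge)
distributions `p t i = exp(-η ∑_{τ<t} ℓ τ i) / ∑_j exp(-η ∑_{τ<t} ℓ τ j)`
satisfy
`∑_{t<T} ∑_{i<n} p t i * ℓ t i ≤ min_{i*} ∑_{t<T} ℓ t i* + (log n)/η + η T`. -/
theorem mwu_regret_bound (n T : ℕ) (hn : 0 < n) (hT : 0 < T)
    (η : ℝ) (hη : 0 < η)
    (ℓ : Fin T → Fin n → ℝ) (hℓ : ∀ t i, ℓ t i ∈ Set.Icc (0 : ℝ) 1)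
    (p : Fin T → Fin n → ℝ)
    (hp : ∀ t i, p t i =
      Real.exp (-η * ∑ τ ∈ Finset.univ.filter (fun τ : Fin T => τ < t), ℓ τ i) /
      ∑ j, Real.exp (-η * ∑ τ ∈ Finset.univ.filter (fun τ : Fin T => τ < t), ℓ τ j)) :
    ∑ t, ∑ i, p t i * ℓ t i ≤
      Finset.univ.inf' ⟨⟨0, hn⟩, Finset.mem_univ _⟩ (fun istar => ∑ t, ℓ t istar)
        + Real.log n / η + η * T := by
  rw [add_assoc, ← sub_le_iff_le_add]
  refine le_inf' _ _ fun k _ => ?_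
  have regret_le := mwu_regret_bound_general hη hℓ k
  simp only [hedgeWeight, Finset.sum_apply, ← hp, Fintype.card_fin] at regret_le
  have variance_term_le : η * ∑ _t : Fin T, (1 - 0 : ℝ) ^ 2 / 8 ≤ η * T := by
    gcongr
    simpa using mul_le_of_le_one_right (T.cast_nonneg (α := ℝ)) (by norm_num : (8 : ℝ)⁻¹ ≤ 1)
  linarith
end

section
/- If n ≥ 2 and the learning rate is chosen as η = √((log n)/T), then the multiplicative weights update distributions satisfy ∑_{t=1}^{T} ∑_{i=1}^{n} p_t(i)·ℓ_t(i) − min_{i*∈{1,…,n}} ∑_{t=1}^{T} ℓ_t(i*) ≤ 2·√(T·log n). -/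
/-!
The log-partition function `Φ(L) = log ∑ i, exp (-η L i)` of the cumulative loss is a potential
for Hedge. When a loss vector `ℓ` is added to `L`, `Φ` grows by the log-moment generating function
of `ℓ` at `-η` under the current Hedge distribution, so by Hoeffding's lemma it drops by at least
`η` times the expected loss of the round, up to an error of `η² / 8` times the squared range of `ℓ`.
Over all rounds `Φ` goes from `log n` to a value at least `-η` times the smallest cumulative loss.
-/

open Finset MeasureTheory ProbabilityTheory

lemma sum_mul_exp_le_of_mem_Icc {ι : Type*} [Fintype ι] {w x : ι → ℝ} {a b : ℝ}
    (hw : w ∈ stdSimplex ℝ ι) (hx : ∀ i, x i ∈ Set.Icc a b) (s : ℝ) :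
    ∑ i, w i * Real.exp (s * x i) ≤
      Real.exp (s * ∑ i, w i * x i + s ^ 2 * (b - a) ^ 2 / 8) := by
  let _ : MeasurableSpace ι := ⊤
  let μ : PMF ι := PMF.ofFintype (fun i => ENNReal.ofReal (w i)) <| by
    rw [← ENNReal.ofReal_sum_of_nonneg fun i _ => hw.1 i, hw.2, ENNReal.ofReal_one]
  have integral_eq (f : ι → ℝ) : ∫ i, f i ∂μ.toMeasure = ∑ i, w i * f i := by
    simp [μ, PMF.integral_eq_sum, hw.1]
  have hoeffding : ∑ i, w i * Real.exp (s * (x i - ∑ j, w j * x j)) ≤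
      Real.exp (s ^ 2 * (b - a) ^ 2 / 8) := by
    have mgf_le := (hasSubgaussianMGF_of_mem_Icc (μ := μ.toMeasure)
      (measurable_of_finite x).aemeasurable (ae_of_all _ hx)).mgf_le s
    simp only [mgf, integral_eq] at mgf_le
    convert mgf_le using 2
    simp only [NNReal.coe_pow, NNReal.coe_div, coe_nnnorm, Real.norm_eq_abs, div_pow, sq_abs,
      NNReal.coe_ofNat]
    ring
  calc ∑ i, w i * Real.exp (s * x i)
      = Real.exp (s * ∑ i, w i * x i) * ∑ i, w i * Real.exp (s * (x i - ∑ j, w j * x j)) := by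
        simp only [mul_sum _ _ (Real.exp _), mul_left_comm (Real.exp _), ← Real.exp_add, mul_sub,
          add_sub_cancel]
    _ ≤ Real.exp (s * ∑ i, w i * x i) * Real.exp (s ^ 2 * (b - a) ^ 2 / 8) := by gcongr
    _ = Real.exp (s * ∑ i, w i * x i + s ^ 2 * (b - a) ^ 2 / 8) := (Real.exp_add _ _).symm

section LogPartition

variable {ι : Type*} [Fintype ι]

/-- The Gibbs distribution at inverse temperature `η` of the energy `L`: the Hedge distribution
with learning rate `η` when `L i` is the cumulative loss of expert `i`. -/
noncomputable def gibbs (η : ℝ) (L : ι → ℝ) (i : ι) : ℝ :=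
  Real.exp (-η * L i) / ∑ j, Real.exp (-η * L j)

/-- The logarithm of the normalizing constant of `gibbs η L`, which is the potential function in
the analysis of Hedge. -/
noncomputable def logPartition (η : ℝ) (L : ι → ℝ) : ℝ :=
  Real.log (∑ i, Real.exp (-η * L i))

lemma logPartition_zero (η : ℝ) : logPartition η (0 : ι → ℝ) = Real.log (Fintype.card ι) := by
  simp [logPartition]

lemma neg_mul_le_logPartition (η : ℝ) (L : ι → ℝ) (i : ι) : -η * L i ≤ logPartition η L :=
  (Real.log_exp _).symm.trans_le <| Real.log_le_log (Real.exp_pos _) <|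
    single_le_sum (f := fun j => Real.exp (-η * L j)) (fun _ _ => (Real.exp_pos _).le) (mem_univ i)

variable [Nonempty ι]

lemma gibbs_mem_stdSimplex (η : ℝ) (L : ι → ℝ) : gibbs η L ∈ stdSimplex ℝ ι := by
  refine ⟨fun i => by unfold gibbs; positivity, ?_⟩
  simp only [gibbs, ← sum_div]
  exact div_self (by positivity)

lemma sum_exp_neg_mul_add (η : ℝ) (L ℓ : ι → ℝ) :
    ∑ i, Real.exp (-η * (L + ℓ) i) =
      (∑ i, Real.exp (-η * L i)) * ∑ i, gibbs η L i * Real.exp (-η * ℓ i) := by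
  have partition_ne_zero : ∑ i, Real.exp (-η * L i) ≠ 0 := by positivity
  simp only [gibbs, mul_sum, ← mul_assoc, mul_div_cancel₀ _ partition_ne_zero, Pi.add_apply,
    mul_add, Real.exp_add]

lemma logPartition_add_le (η : ℝ) (L : ι → ℝ) {ℓ : ι → ℝ} {a b : ℝ}
    (hℓ : ∀ i, ℓ i ∈ Set.Icc a b) :
    logPartition η (L + ℓ) ≤
      logPartition η L - η * ∑ i, gibbs η L i * ℓ i + η ^ 2 * (b - a) ^ 2 / 8 := by
  have hoeffding := sum_mul_exp_le_of_mem_Icc (gibbs_mem_stdSimplex η L) hℓ (-η)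
  calc logPartition η (L + ℓ)
      ≤ Real.log ((∑ i, Real.exp (-η * L i)) *
          Real.exp (-η * ∑ i, gibbs η L i * ℓ i + (-η) ^ 2 * (b - a) ^ 2 / 8)) := by
        rw [logPartition]
        refine Real.log_le_log (by positivity) ?_
        rw [sum_exp_neg_mul_add]
        gcongr
    _ = logPartition η L - η * ∑ i, gibbs η L i * ℓ i + η ^ 2 * (b - a) ^ 2 / 8 := by
        rw [Real.log_mul (by positivity) (Real.exp_ne_zero _), Real.log_exp, logPartition]
        ring

end LogPartition

section Regret

variable {ι : Type*} {T : ℕ}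

/-- The total loss of each expert in the rounds before round `k`. The bound `k` is a natural
number rather than an element of `Fin T` so that `k = T` gives the total over all rounds. -/
def cumulativeLoss (ℓ : Fin T → ι → ℝ) (k : ℕ) (i : ι) : ℝ :=
  ∑ τ with τ.val < k, ℓ τ i

lemma cumulativeLoss_zero (ℓ : Fin T → ι → ℝ) : cumulativeLoss ℓ 0 = 0 := by
  ext i
  simp [cumulativeLoss]

lemma cumulativeLoss_last (ℓ : Fin T → ι → ℝ) (i : ι) : cumulativeLoss ℓ T i = ∑ t, ℓ t i := by
  simp [cumulativeLoss]

lemma cumulativeLoss_succ (ℓ : Fin T → ι → ℝ) (t : Fin T) :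
    cumulativeLoss ℓ (t + 1) = cumulativeLoss ℓ t + ℓ t := by
  have filter_lt_succ : univ.filter (fun τ : Fin T => τ.val < t + 1) =
      insert t (univ.filter fun τ : Fin T => τ.val < t) := by
    ext τ
    simp only [mem_filter_univ, mem_insert, Fin.ext_iff]
    omega
  ext i
  rw [cumulativeLoss, filter_lt_succ, sum_insert (by simp), add_comm]
  rfl

variable [Fintype ι]

lemma mul_gibbs_regret_le (η : ℝ) {ℓ : Fin T → ι → ℝ} {a b : Fin T → ℝ}
    (hℓ : ∀ t i, ℓ t i ∈ Set.Icc (a t) (b t)) (i : ι) :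
    η * (∑ t : Fin T, ∑ j, gibbs η (cumulativeLoss ℓ t) j * ℓ t j - ∑ t, ℓ t i) ≤
      Real.log (Fintype.card ι) + η ^ 2 / 8 * ∑ t, (b t - a t) ^ 2 := by
  have : Nonempty ι := ⟨i⟩
  let Φ (k : ℕ) : ℝ := logPartition η (cumulativeLoss ℓ k)
  have potential_drop (t : Fin T) : Φ (t + 1) - Φ t ≤
      -η * ∑ j, gibbs η (cumulativeLoss ℓ t) j * ℓ t j + η ^ 2 / 8 * (b t - a t) ^ 2 := by
    have growth := logPartition_add_le η (cumulativeLoss ℓ t) (hℓ t)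
    rw [← cumulativeLoss_succ] at growth
    linarith
  have telescope : ∑ t : Fin T, (Φ (t + 1) - Φ t) = Φ T - Φ 0 := by
    rw [Fin.sum_univ_eq_sum_range (fun k => Φ (k + 1) - Φ k), sum_range_sub]
  have initial : Φ 0 = Real.log (Fintype.card ι) := by
    simp only [Φ, cumulativeLoss_zero, logPartition_zero]
  have final : -η * ∑ t, ℓ t i ≤ Φ T := by
    simpa only [cumulativeLoss_last] using neg_mul_le_logPartition η (cumulativeLoss ℓ T) i
  have total_drop := sum_le_sum fun t (_ : t ∈ univ) => potential_drop t
  rw [telescope, initial, sum_add_distrib, ← mul_sum, ← mul_sum] at total_drop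
  linarith

theorem gibbs_regret_le [Nonempty ι] {η : ℝ} (hη : 0 < η) {ℓ : Fin T → ι → ℝ} {a b : Fin T → ℝ}
    (hℓ : ∀ t i, ℓ t i ∈ Set.Icc (a t) (b t)) :
    ∑ t : Fin T, ∑ i, gibbs η (cumulativeLoss ℓ t) i * ℓ t i -
        univ.inf' univ_nonempty (fun i => ∑ t, ℓ t i) ≤
      Real.log (Fintype.card ι) / η + η / 8 * ∑ t, (b t - a t) ^ 2 := by
  obtain ⟨best, -, hbest⟩ := exists_mem_eq_inf' univ_nonempty (fun i => ∑ t, ℓ t i)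
  rw [hbest]
  refine le_of_mul_le_mul_left ((mul_gibbs_regret_le η hℓ best).trans_eq ?_) hη
  field_simp

end Regret

lemma div_sqrt_div {x : ℝ} (hx : 0 ≤ x) (y : ℝ) : x / √(x / y) = √(y * x) := by
  rw [Real.sqrt_div hx, Real.sqrt_mul' y hx, div_div_eq_mul_div, mul_div_right_comm, Real.div_sqrt,
    mul_comm]

lemma sqrt_div_mul_self {x : ℝ} (hx : 0 ≤ x) (y : ℝ) : √(x / y) * y = √(y * x) := by
  rw [Real.sqrt_div hx, Real.sqrt_mul' y hx, div_mul_eq_mul_div, mul_div_assoc, Real.div_sqrt,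
    mul_comm]

theorem mwu_regret_tuned_general {ι : Type*} [Fintype ι] [Nontrivial ι] {T : ℕ} (hT : 0 < T)
    {η : ℝ} (hη : η = √(Real.log (Fintype.card ι) / T)) {ℓ : Fin T → ι → ℝ} {a : Fin T → ℝ}
    (hℓ : ∀ t i, ℓ t i ∈ Set.Icc (a t) (a t + 1)) {p : Fin T → ι → ℝ}
    (hp : ∀ t i, p t i =
      Real.exp (-η * ∑ τ ∈ univ.filter (fun τ : Fin T => τ < t), ℓ τ i) /
      ∑ j, Real.exp (-η * ∑ τ ∈ univ.filter (fun τ : Fin T => τ < t), ℓ τ j)) :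
    ∑ t, ∑ i, p t i * ℓ t i - univ.inf' univ_nonempty (fun i => ∑ t, ℓ t i) ≤
      9 / 8 * √(T * Real.log (Fintype.card ι)) := by
  have hlog : 0 < Real.log (Fintype.card ι) :=
    Real.log_pos (by exact_mod_cast Fintype.one_lt_card (α := ι))
  have hηpos : 0 < η := by rw [hη]; positivity
  have p_eq_gibbs (t : Fin T) (i : ι) : p t i = gibbs η (cumulativeLoss ℓ t) i := hp t i
  simp only [p_eq_gibbs]
  calc _ ≤ Real.log (Fintype.card ι) / η + η * T / 8 := by
        simpa [mul_div_right_comm] using gibbs_regret_le hηpos hℓ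
    _ = 9 / 8 * √(T * Real.log (Fintype.card ι)) := by
        rw [hη, div_sqrt_div hlog.le, sqrt_div_mul_self hlog.le]
        ring

/-- **MWU with tuned learning rate (Lemma 2.3, tuned rate).**
If `n ≥ 2` and the learning rate is `η = √((log n)/T)`, the multiplicative
weights update distributions satisfy
`∑_{t<T} ∑_{i<n} p t i * ℓ t i − min_{i*} ∑_{t<T} ℓ t i* ≤ 2√(T log n)`. -/
theorem mwu_regret_tuned (n T : ℕ) (hn : 2 ≤ n) (hT : 0 < T)
    (η : ℝ) (hη : η = Real.sqrt (Real.log n / T))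
    (ℓ : Fin T → Fin n → ℝ) (hℓ : ∀ t i, ℓ t i ∈ Set.Icc (0 : ℝ) 1)
    (p : Fin T → Fin n → ℝ)
    (hp : ∀ t i, p t i =
      Real.exp (-η * ∑ τ ∈ Finset.univ.filter (fun τ : Fin T => τ < t), ℓ τ i) /
      ∑ j, Real.exp (-η * ∑ τ ∈ Finset.univ.filter (fun τ : Fin T => τ < t), ℓ τ j)) :
    ∑ t, ∑ i, p t i * ℓ t i -
      Finset.univ.inf' ⟨⟨0, by omega⟩, Finset.mem_univ _⟩ (fun istar => ∑ t, ℓ t istar)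
        ≤ 2 * Real.sqrt (T * Real.log n) := by
  have : Nontrivial (Fin n) := Fin.nontrivial_iff_two_le.mpr hn
  have regret_le := mwu_regret_tuned_general hT (by simpa using hη) (a := 0) (by simpa using hℓ) hp
  exact regret_le.trans (by rw [Fintype.card_fin]; gcongr; norm_num)
end

section
/- (Loss vs. length dichotomy, Lemma 3.1.) Let ε > 0 and α ∈ (0,1). Let m, M be real numbers with 0 < m ≤ M, and let L_ii, L_ij, L_1 be real numbers with L_1 ≥ 0, L_ij ≤ 1, and L_ij > L_ii + ε. Define L_jj := (L_1·(M − m) + L_ij·m)/M. Then at least one of the following holds: (i) L_jj ≥ L_ii + ε − α, or (ii) M ≥ (1 + α/(1 − α))·m. -/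
/-!
The overall average of expert `j` falls short of `Lij` by exactly `Lij - L1` times the share
`(M - m) / M` of the earlier portion, hence by at most that share because `Lij - L1 ≤ 1`. If the
share is at most `α`, this bounds the loss; otherwise `m ≤ M * (1 - α)`, which bounds the length.
-/

section OrderedField

variable {K : Type*} [Field K]

theorem average_eq_sub_mul_div {M : K} (hM : M ≠ 0) (a b m : K) :
    (a * (M - m) + b * m) / M = b - (b - a) * ((M - m) / M) := by
  field_simp
  ring

variable [LinearOrder K] [IsStrictOrderedRing K]

theorem sub_mul_le_average {a b c m M α : K} (hM : 0 < M) (hmM : m ≤ M) (hc : 0 ≤ c)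
    (hgap : b - a ≤ c) (hshare : (M - m) / M ≤ α) :
    b - c * α ≤ (a * (M - m) + b * m) / M := by
  have hshare_nonneg : 0 ≤ (M - m) / M := div_nonneg (sub_nonneg.mpr hmM) hM.le
  rw [average_eq_sub_mul_div hM.ne']
  exact sub_le_sub_left (mul_le_mul hgap hshare hshare_nonneg hc) b

theorem one_add_div_one_sub_mul_le {m M α : K} (hm : 0 < m) (hM : 0 < M)
    (hshare : α ≤ (M - m) / M) : (1 + α / (1 - α)) * m ≤ M := by
  have hlen : m ≤ M * (1 - α) := by
    rw [le_div_iff₀ hM] at hshare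
    linarith
  have hα : 0 < 1 - α := pos_of_mul_pos_right (hm.trans_le hlen) hM.le
  calc (1 + α / (1 - α)) * m = m / (1 - α) := by
        rw [one_add_div hα.ne', sub_add_cancel, one_div_mul_eq_div]
    _ ≤ M := (div_le_iff₀ hα).mpr hlen

theorem loss_vs_length_general {ε α m M Lii Lij L1 Ljj : K} (hm : 0 < m) (hmM : m ≤ M)
    (hgap : Lij - L1 ≤ 1) (hsurv : Lii + ε ≤ Lij)
    (hLjj : Ljj = (L1 * (M - m) + Lij * m) / M) :
    Ljj ≥ Lii + ε - α ∨ M ≥ (1 + α / (1 - α)) * m := by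
  have hM : 0 < M := hm.trans_le hmM
  refine (le_total ((M - m) / M) α).imp (fun hshare => ?_) (one_add_div_one_sub_mul_le hm hM)
  calc Lii + ε - α ≤ Lij - 1 * α := by linarith
    _ ≤ (L1 * (M - m) + Lij * m) / M := sub_mul_le_average hM hmM zero_le_one hgap hshare
    _ = Ljj := hLjj.symm

end OrderedField

/-- **Loss vs. length dichotomy (Lemma 3.1, arithmetic core).**
Expert `i` has average loss `Lii` over its interval of length `m`; the older
expert `j` has average loss `Lij` over that same interval, average loss
`L1 ≥ 0` over the earlier portion of length `M − m`, and overall average loss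
`Ljj = (L1(M−m) + Lij·m)/M`. If `Lij > Lii + ε` (expert `i` survived the
eviction rule against `j`), then either `Ljj ≥ Lii + ε − α` or
`M ≥ (1 + α/(1−α))·m`. -/
theorem loss_vs_length (ε α : ℝ) (hε : 0 < ε) (hα : α ∈ Set.Ioo (0 : ℝ) 1)
    (m M Lii Lij L1 : ℝ) (hm : 0 < m) (hmM : m ≤ M)
    (hL1 : 0 ≤ L1) (hLij : Lij ≤ 1) (hsurv : Lij > Lii + ε)
    (Ljj : ℝ) (hLjj : Ljj = (L1 * (M - m) + Lij * m) / M) :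
    Ljj ≥ Lii + ε - α ∨ M ≥ (1 + α / (1 - α)) * m :=
  loss_vs_length_general hm hmM (by linarith) hsurv.le hLjj
end

section
/- (Potential increase step.) Let ε > 0, let m, M be real numbers with 0 < m ≤ M, and let L_ii, L_ij, L_1 be real numbers with L_ii ≥ 0, L_1 ≥ 0, L_ij ≤ 1, and L_ij > L_ii + ε. Define L_jj := (L_1·(M − m) + L_ij·m)/M. Then 2·log M + L_jj ≥ 2·log m + L_ii + ε. -/
/-!
Write `r = m / M`. Since `L1 ≥ 0`, the average over the long interval satisfies `Ljj ≥ Lij * r`, so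
replacing `Lij` by `Ljj` loses at most `Lij * (1 - r)`. The logarithmic term gains a multiple of
`log M - log m ≥ 1 - r`, which pays for this as soon as its coefficient is at least `Lij`.
-/

theorem one_sub_div_le_log_sub_log {x y : ℝ} (hx : 0 < x) (hy : 0 < y) :
    1 - x / y ≤ Real.log y - Real.log x := by
  rw [← Real.log_div hy.ne' hx.ne', ← inv_div y x]
  exact Real.one_sub_inv_le_log_of_pos (div_pos hy hx)

theorem mul_div_le_weighted_average {K : Type*} [Field K] [LinearOrder K] [IsStrictOrderedRing K]
    {m M a : K} (hM : 0 ≤ M) (hmM : m ≤ M) (ha : 0 ≤ a) (b : K) :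
    b * (m / M) ≤ (a * (M - m) + b * m) / M := by
  rw [← mul_div_assoc]
  gcongr
  exact le_add_of_nonneg_left (mul_nonneg ha (sub_nonneg.2 hmM))

theorem potential_increase_general {c m M Lij L1 Ljj : ℝ} (hc : 0 ≤ c) (hm : 0 < m) (hmM : m ≤ M)
    (hL1 : 0 ≤ L1) (hLij : Lij ≤ c) (hLjj : Ljj = (L1 * (M - m) + Lij * m) / M) :
    c * Real.log m + Lij ≤ c * Real.log M + Ljj := by
  have hM : 0 < M := hm.trans_le hmM
  have hr : 0 ≤ 1 - m / M := sub_nonneg.2 ((div_le_one hM).2 hmM)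
  have loss_drop_le_log_gain : Lij - Ljj ≤ c * (Real.log M - Real.log m) :=
    calc
      Lij - Ljj ≤ Lij - Lij * (m / M) := by
        rw [hLjj]
        exact sub_le_sub_left (mul_div_le_weighted_average hM.le hmM hL1 Lij) Lij
      _ = Lij * (1 - m / M) := by ring
      _ ≤ c * (1 - m / M) := mul_le_mul_of_nonneg_right hLij hr
      _ ≤ c * (Real.log M - Real.log m) :=
        mul_le_mul_of_nonneg_left (one_sub_div_le_log_sub_log hm hM) hc
  linarith

/-- **Potential increase step (key step of Lemma 3.2).**
With the potential `Φ = 2 log x + L` for an expert with interval length `x`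
and average loss `L`: if `0 < m ≤ M`, `Lii ≥ 0`, `L1 ≥ 0`, `Lij ≤ 1`,
`Lij > Lii + ε`, and `Ljj = (L1(M−m) + Lij·m)/M`, then
`2 log M + Ljj ≥ 2 log m + Lii + ε`. -/
theorem potential_increase (ε : ℝ) (hε : 0 < ε)
    (m M Lii Lij L1 : ℝ) (hm : 0 < m) (hmM : m ≤ M)
    (hLii : 0 ≤ Lii) (hL1 : 0 ≤ L1) (hLij : Lij ≤ 1) (hsurv : Lij > Lii + ε)
    (Ljj : ℝ) (hLjj : Ljj = (L1 * (M - m) + Lij * m) / M) :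
    2 * Real.log M + Ljj ≥ 2 * Real.log m + Lii + ε := by
  have h := potential_increase_general zero_le_two hm hmM hL1 (hLij.trans one_le_two) hLjj
  linarith
end

section
/- (Pool size bound, Lemma 3.2, abstract form.) Let ε ∈ (0, 1/2], let T ≥ 3 and t ≤ T be positive integers, and let S ≥ 1 be an integer. Suppose a_1 > a_2 > ⋯ > a_S are integers with 1 ≤ a_τ ≤ t for all τ, and ℓ_1,…,ℓ_S : {1,…,t} → [0,1] are loss sequences. For an expert τ and an interval I ⊆ {1,…,t}, write L_I(τ) := (1/|I|)·∑_{ν∈I} ℓ_τ(ν). Assume that for every τ ∈ {1,…,S−1}: L_{[a_τ, t]}(τ+1) > L_{[a_τ, t]}(τ) + ε (expert τ survives the eviction rule against the older expert τ+1). Then S ≤ (4/ε)·log T. -/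
/-!
Add to the average loss of an expert on its interval the logarithm of the length of the interval.
Lengthening the interval never decreases this potential: passing from length `n` to `m`, an average
in `[0, 1]` drops by at most `1 - n / m`, because the new losses are nonnegative, and
`1 - n / m ≤ log m - log n`. Passing to the next older expert on the same interval raises the
potential by at least `ε`, by the survival rule. Along the `S - 1` steps the potential stays in
`[0, 1 + log T]`, hence `(S - 1) * ε ≤ 1 + log T`.
-/

section PoolSize

open Finset
open scoped BigOperators

lemma add_nsmul_le_of_forall_add_le {α : Type*} [AddCommMonoid α] [Preorder α] [AddRightMono α]
    {c : α} {n : ℕ} {u : Fin (n + 1) → α} (h : ∀ i : Fin n, u i.castSucc + c ≤ u i.succ) :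
    u 0 + n • c ≤ u (Fin.last n) := by
  induction n with
  | zero => simp
  | succ n ih =>
    calc u 0 + (n + 1) • c = u 0 + n • c + c := by simp only [succ_nsmul, add_assoc]
      _ ≤ u (Fin.last n).castSucc + c := by
        gcongr
        exact ih (u := fun i => u i.castSucc) fun i => h i.castSucc
      _ ≤ u (Fin.last (n + 1)) := h (Fin.last n)

variable {ι : Type*}

lemma card_div_card_mul_expect_le_expect {K : Type*} [Semifield K] [LinearOrder K]
    [IsStrictOrderedRing K] {s t : Finset ι} {f : ι → K} (hst : s ⊆ t)
    (hf : ∀ i ∈ t, i ∉ s → 0 ≤ f i) :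
    (#s / #t : K) * 𝔼 i ∈ s, f i ≤ 𝔼 i ∈ t, f i := by
  rw [div_mul_eq_mul_div, card_mul_expect, expect_eq_sum_div_card]
  gcongr
  exact hf

/-- The potential of an expert with losses `f` on a finite set `s` of epochs: its average loss on
`s` plus the logarithm of the size of `s`. -/
noncomputable def lossPotential (s : Finset ι) (f : ι → ℝ) : ℝ :=
  𝔼 i ∈ s, f i + Real.log #s

lemma lossPotential_nonneg {s : Finset ι} {f : ι → ℝ} (hf : ∀ i ∈ s, 0 ≤ f i) :
    0 ≤ lossPotential s f :=
  add_nonneg (expect_nonneg hf) (Real.log_natCast_nonneg _)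

lemma lossPotential_le_lossPotential_of_subset {s t : Finset ι} {f : ι → ℝ} (hs : s.Nonempty)
    (hst : s ⊆ t) (hf_le : 𝔼 i ∈ s, f i ≤ 1) (hf_nonneg : ∀ i ∈ t, i ∉ s → 0 ≤ f i) :
    lossPotential s f ≤ lossPotential t f := by
  have hs_pos : (0 : ℝ) < #s := by exact_mod_cast hs.card_pos
  have ht_pos : (0 : ℝ) < #t := by exact_mod_cast (hs.mono hst).card_pos
  have hratio_le : (#s / #t : ℝ) ≤ 1 := (div_le_one ht_pos).2 (by gcongr)
  have havg : 𝔼 i ∈ s, f i - 𝔼 i ∈ t, f i ≤ 1 - #s / #t := calc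
    𝔼 i ∈ s, f i - 𝔼 i ∈ t, f i ≤ 𝔼 i ∈ s, f i - #s / #t * 𝔼 i ∈ s, f i := by
      gcongr
      exact card_div_card_mul_expect_le_expect hst hf_nonneg
    _ = (1 - #s / #t) * 𝔼 i ∈ s, f i := by ring
    _ ≤ 1 - #s / #t := mul_le_of_le_one_right (sub_nonneg.2 hratio_le) hf_le
  have hlog : Real.log #s - Real.log #t ≤ #s / #t - 1 := by
    rw [← Real.log_div hs_pos.ne' ht_pos.ne']
    exact Real.log_le_sub_one_of_pos (div_pos hs_pos ht_pos)
  unfold lossPotential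
  linarith

variable {ε : ℝ} {n : ℕ} {I : Fin (n + 1) → Finset ι} {ℓ : Fin (n + 1) → ι → ℝ}

lemma mul_le_one_add_log_card_of_survival (hI : Monotone I) (hI_ne : ∀ τ, (I τ).Nonempty)
    (hℓ : ∀ τ, ∀ ν ∈ I τ, ℓ τ ν ∈ Set.Icc (0 : ℝ) 1)
    (hsurv : ∀ τ : Fin n,
      𝔼 ν ∈ I τ.castSucc, ℓ τ.castSucc ν + ε ≤ 𝔼 ν ∈ I τ.castSucc, ℓ τ.succ ν) :
    n * ε ≤ 1 + Real.log #(I (Fin.last n)) := by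
  have hstep (τ : Fin n) : lossPotential (I τ.castSucc) (ℓ τ.castSucc) + ε ≤
      lossPotential (I τ.succ) (ℓ τ.succ) := by
    have hsub : I τ.castSucc ⊆ I τ.succ := hI τ.castSucc_lt_succ.le
    calc lossPotential (I τ.castSucc) (ℓ τ.castSucc) + ε
        ≤ lossPotential (I τ.castSucc) (ℓ τ.succ) := by
          unfold lossPotential
          linarith [hsurv τ]
      _ ≤ lossPotential (I τ.succ) (ℓ τ.succ) :=
          lossPotential_le_lossPotential_of_subset (hI_ne _) hsub
            (expect_le (hI_ne _) fun ν hν => (hℓ _ ν (hsub hν)).2) fun ν hν _ => (hℓ _ ν hν).1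
  calc n * ε ≤ lossPotential (I 0) (ℓ 0) + n • ε := by
        rw [nsmul_eq_mul]
        exact le_add_of_nonneg_left (lossPotential_nonneg fun ν hν => (hℓ 0 ν hν).1)
    _ ≤ lossPotential (I (Fin.last n)) (ℓ (Fin.last n)) :=
        add_nsmul_le_of_forall_add_le (u := fun τ => lossPotential (I τ) (ℓ τ)) hstep
    _ ≤ 1 + Real.log #(I (Fin.last n)) := by
        unfold lossPotential
        gcongr
        exact expect_le (hI_ne _) fun ν hν => (hℓ _ ν hν).2

theorem pool_size_bound_general (hε : ε ∈ Set.Ioc (0 : ℝ) 2) {T : ℝ} (hT : Real.exp 1 ≤ T)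
    (hI : Monotone I) (hI_ne : ∀ τ, (I τ).Nonempty) (hI_card : #(I (Fin.last n)) ≤ T)
    (hℓ : ∀ τ, ∀ ν ∈ I τ, ℓ τ ν ∈ Set.Icc (0 : ℝ) 1)
    (hsurv : ∀ τ : Fin n,
      𝔼 ν ∈ I τ.castSucc, ℓ τ.castSucc ν + ε ≤ 𝔼 ν ∈ I τ.castSucc, ℓ τ.succ ν) :
    ((n + 1 : ℕ) : ℝ) ≤ 4 / ε * Real.log T := by
  have hsteps := mul_le_one_add_log_card_of_survival hI hI_ne hℓ hsurv
  have hcard_pos : (0 : ℝ) < #(I (Fin.last n)) := by exact_mod_cast (hI_ne _).card_pos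
  have hlog_card : Real.log #(I (Fin.last n)) ≤ Real.log T := Real.log_le_log hcard_pos hI_card
  have hlog : 1 ≤ Real.log T := (Real.le_log_iff_exp_le (hcard_pos.trans_le hI_card)).2 hT
  rw [div_mul_eq_mul_div, le_div_iff₀ hε.1]
  push_cast
  linarith [hε.2]

end PoolSize

/-- **Pool size bound (Lemma 3.2, abstract form).**
Experts are indexed `τ = 0,…,S−1` in order of joining time, expert `τ` having
entered at epoch `a τ`, with `a` strictly decreasing (a larger index means an
earlier entry). Expert `τ`'s interval is `[a τ, t]` and `L_I(τ)` is the average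
of `ℓ τ` over `I`. If every expert survives the `ε`-threshold eviction rule
against the next older expert, i.e. `L_{[a τ, t]}(τ+1) > L_{[a τ, t]}(τ) + ε`,
then `S ≤ (4/ε)·log T`. -/
theorem pool_size_bound (ε : ℝ) (hε : ε ∈ Set.Ioc (0 : ℝ) (1/2))
    (T t S : ℕ) (hT : 3 ≤ T) (ht : 0 < t) (htT : t ≤ T) (hS : 1 ≤ S)
    (a : Fin S → ℕ) (ha : ∀ τ, 1 ≤ a τ ∧ a τ ≤ t)
    (hdec : ∀ τ σ : Fin S, (τ : ℕ) < (σ : ℕ) → a σ < a τ)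
    (ℓ : Fin S → ℕ → ℝ) (hℓ : ∀ τ ν, ν ∈ Finset.Icc 1 t → ℓ τ ν ∈ Set.Icc (0 : ℝ) 1)
    (hsurv : ∀ τ : Fin S, ∀ h : (τ : ℕ) + 1 < S,
      (∑ ν ∈ Finset.Icc (a τ) t, ℓ ⟨(τ : ℕ) + 1, h⟩ ν) / ((Finset.Icc (a τ) t).card : ℝ) >
      (∑ ν ∈ Finset.Icc (a τ) t, ℓ τ ν) / ((Finset.Icc (a τ) t).card : ℝ) + ε) :
    (S : ℝ) ≤ (4 / ε) * Real.log T := by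
  obtain ⟨n, rfl⟩ := Nat.exists_eq_add_of_le' hS
  have hanti : Antitone a := StrictAnti.antitone fun τ σ => hdec τ σ
  have hT_exp : Real.exp 1 ≤ T := Real.exp_one_lt_three.le.trans (by exact_mod_cast hT)
  have hcard : (Finset.Icc (a (Fin.last n)) t).card ≤ T := by
    have := ha (Fin.last n)
    rw [Nat.card_Icc]
    omega
  refine pool_size_bound_general (I := fun τ => Finset.Icc (a τ) t)
    ⟨hε.1, hε.2.trans (by norm_num)⟩ hT_exp (fun _ _ h => Finset.Icc_subset_Icc_left (hanti h))
    (fun τ => Finset.nonempty_Icc.2 (ha τ).2) (Nat.cast_le.2 hcard)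
    (fun τ ν hν => hℓ τ ν (Finset.Icc_subset_Icc_left (ha τ).1 hν)) fun τ => ?_
  simp only [Finset.expect_eq_sum_div_card]
  exact (hsurv τ.castSucc (Nat.succ_lt_succ τ.isLt)).le
end

section
/- (Lemma 5.2: minmax value.) Let S ⊆ {1,…,n} with |S| = k. Then (i) for every p ∈ Δ_n, ℓ(p,S) ≥ 1/k; and (ii) for the strategy p* ∈ Δ_n defined by p*_i = 1/k if i ∈ S and p*_i = 0 otherwise, ℓ(p*,S) = 1/k. Consequently, the minimum of ℓ(p,S) over p ∈ Δ_n equals 1/k. -/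
/-!
The uniform strategy `p*` on `S` is optimal for both players of the game `A_S`. As a row strategy
it reproduces itself, `p* A_S = p*`, so every column costs at most `1 / k`. As a column strategy it
makes row `i` cost `p* i = 1 / k` if `i ∈ S` and `4 ≥ 1 / k` otherwise, so by weak duality no row
strategy can guarantee a loss below `1 / k`.
-/

/-- The game matrix `A_S`: Alice (the row player) gets loss `4` outside the
support `S`, loss `1` on the diagonal inside `S`, and `0` otherwise. -/
def gameA {n : ℕ} (S : Finset (Fin n)) (i j : Fin n) : ℝ :=
  if i ∈ S then (if i = j then 1 else 0) else 4

/-- `ℓ(p,S)`: the worst-case loss of row strategy `p` in the game `A_S`,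
i.e. `max_j ∑_i p i * A_S[i,j]`. -/
noncomputable def gameLoss {n : ℕ} (hn : 0 < n) (p : Fin n → ℝ) (S : Finset (Fin n)) : ℝ :=
  Finset.univ.sup' ⟨⟨0, hn⟩, Finset.mem_univ _⟩ (fun j => ∑ i, p i * gameA S i j)

section MatrixGame

open Finset Matrix

lemma le_of_le_mulVec_of_vecMul_le {R ι κ : Type*} [Fintype ι] [Fintype κ] [Semiring R]
    [PartialOrder R] [IsOrderedRing R] {A : Matrix ι κ R} {p : ι → R} {q : κ → R} {a b : R}
    (hp : p ∈ stdSimplex R ι) (hq : q ∈ stdSimplex R κ)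
    (ha : ∀ i, a ≤ (A *ᵥ q) i) (hb : ∀ j, (p ᵥ* A) j ≤ b) : a ≤ b :=
  calc a = p ⬝ᵥ fun _ ↦ a := by rw [dotProduct, ← sum_mul, hp.2, one_mul]
    _ ≤ p ⬝ᵥ A *ᵥ q := dotProduct_le_dotProduct_of_nonneg_left ha hp.1
    _ = p ᵥ* A ⬝ᵥ q := dotProduct_mulVec p A q
    _ ≤ (fun _ ↦ b) ⬝ᵥ q := dotProduct_le_dotProduct_of_nonneg_right hb hq.1
    _ = b := by rw [dotProduct, ← mul_sum, hq.2, mul_one]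

/-- The uniform probability vector on `S` (zero if `S` is empty): the strategy `p*`, used below for
the row player and for the column player alike. -/
noncomputable def uniformStrategy {ι : Type*} [DecidableEq ι] (S : Finset ι) (i : ι) : ℝ :=
  if i ∈ S then 1 / #S else 0

section Uniform

variable {ι : Type*} [DecidableEq ι]

lemma uniformStrategy_mem_stdSimplex [Fintype ι] {S : Finset ι} (hS : S.Nonempty) :
    uniformStrategy S ∈ stdSimplex ℝ ι := by
  refine ⟨fun i ↦ ?_, ?_⟩
  · unfold uniformStrategy
    positivity
  · have hcard : (#S : ℝ) ≠ 0 := Nat.cast_ne_zero.mpr hS.card_ne_zero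
    simp [uniformStrategy, hcard]

lemma uniformStrategy_of_notMem {S : Finset ι} {i : ι} (hi : i ∉ S) : uniformStrategy S i = 0 :=
  if_neg hi

lemma uniformStrategy_le_one_div_card (S : Finset ι) (i : ι) : uniformStrategy S i ≤ 1 / #S := by
  unfold uniformStrategy
  split_ifs
  · exact le_rfl
  · positivity

end Uniform

section Game

variable {n : ℕ} {S : Finset (Fin n)}

lemma gameLoss_le_iff {hn : 0 < n} {p : Fin n → ℝ} {c : ℝ} :
    gameLoss hn p S ≤ c ↔ ∀ j, (p ᵥ* of (gameA S)) j ≤ c :=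
  (sup'_le_iff _ _).trans <| by simp [vecMul, dotProduct]

lemma vecMul_gameA_eq_self {p : Fin n → ℝ} (hp : ∀ i ∉ S, p i = 0) :
    p ᵥ* of (gameA S) = p := by
  ext j
  have hterm (i : Fin n) : p i * gameA S i j = if i = j then p i else 0 := by
    by_cases hi : i ∈ S <;> simp [gameA, hi, hp]
  simp [vecMul, dotProduct, hterm]

lemma gameA_mulVec_apply {q : Fin n → ℝ} (hq : ∑ j, q j = 1) (i : Fin n) :
    (of (gameA S) *ᵥ q) i = if i ∈ S then q i else 4 := by
  by_cases hi : i ∈ S <;> simp [mulVec, dotProduct, gameA, hi, ← mul_sum, hq]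

lemma one_div_card_le_gameA_mulVec_uniformStrategy (hS : S.Nonempty) (i : Fin n) :
    1 / (#S : ℝ) ≤ (of (gameA S) *ᵥ uniformStrategy S) i := by
  rw [gameA_mulVec_apply (uniformStrategy_mem_stdSimplex hS).2]
  split_ifs with hi
  · simp [uniformStrategy, hi]
  · calc 1 / (#S : ℝ) ≤ 1 := by simpa using Nat.cast_inv_le_one _
      _ ≤ 4 := by norm_num

lemma one_div_card_le_gameLoss (hn : 0 < n) (hS : S.Nonempty) {p : Fin n → ℝ}
    (hp : p ∈ stdSimplex ℝ (Fin n)) : 1 / (#S : ℝ) ≤ gameLoss hn p S :=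
  le_of_le_mulVec_of_vecMul_le hp (uniformStrategy_mem_stdSimplex hS)
    (one_div_card_le_gameA_mulVec_uniformStrategy hS) (gameLoss_le_iff.mp le_rfl)

lemma gameLoss_uniformStrategy (hn : 0 < n) (hS : S.Nonempty) :
    gameLoss hn (uniformStrategy S) S = 1 / #S := by
  refine le_antisymm (gameLoss_le_iff.mpr fun j ↦ ?_)
    (one_div_card_le_gameLoss hn hS (uniformStrategy_mem_stdSimplex hS))
  rw [vecMul_gameA_eq_self fun _ ↦ uniformStrategy_of_notMem]
  exact uniformStrategy_le_one_div_card S j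

end Game

end MatrixGame

/-- **Lemma 5.2 (minmax value).** For any `S ⊆ [n]` with `|S| = k`:
(i) every probability vector `p` has `ℓ(p,S) ≥ 1/k`; (ii) the uniform
strategy `p*` on `S` achieves `ℓ(p*,S) = 1/k`; consequently the minimum of
`ℓ(p,S)` over probability vectors `p` equals `1/k`. -/
theorem game_minmax_value (n k : ℕ) (hn : 0 < n) (hk1 : 1 ≤ k) (hkn : k ≤ n)
    (S : Finset (Fin n)) (hS : S.card = k) :
    (∀ p : Fin n → ℝ, (∀ i, 0 ≤ p i) → (∑ i, p i) = 1 → gameLoss hn p S ≥ 1 / k) ∧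
    gameLoss hn (fun i => if i ∈ S then (1 : ℝ) / k else 0) S = 1 / k ∧
    IsLeast {x : ℝ | ∃ p : Fin n → ℝ,
      (∀ i, 0 ≤ p i) ∧ (∑ i, p i) = 1 ∧ x = gameLoss hn p S} (1 / k) := by
  subst hS
  have hS : S.Nonempty := Finset.card_pos.mp hk1
  have hlower : ∀ p : Fin n → ℝ, (∀ i, 0 ≤ p i) → (∑ i, p i) = 1 →
      gameLoss hn p S ≥ 1 / S.card :=
    fun p hp0 hp1 ↦ one_div_card_le_gameLoss hn hS ⟨hp0, hp1⟩
  obtain ⟨hu0, hu1⟩ := uniformStrategy_mem_stdSimplex hS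
  have hvalue := gameLoss_uniformStrategy hn hS
  refine ⟨hlower, hvalue, ⟨uniformStrategy S, hu0, hu1, hvalue.symm⟩, ?_⟩
  rintro _ ⟨p, hp0, hp1, rfl⟩
  exact hlower p hp0 hp1
end

section
/- (Maxmin bound for the game A_S.) Let S ⊆ {1,…,n} with |S| = k. Then for every q ∈ Δ_n, min_{i∈{1,…,n}} ∑_{j=1}^n A_S[i,j]·q_j ≤ 1/k. -/
section Averaging

variable {ι 𝕜 : Type*} [Field 𝕜] [LinearOrder 𝕜] [IsStrictOrderedRing 𝕜]

theorem exists_mem_le_sum_div_card {s t : Finset ι} (hs : s.Nonempty) (hst : s ⊆ t) {f : ι → 𝕜}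
    (hf : ∀ j ∈ t, j ∉ s → 0 ≤ f j) : ∃ i ∈ s, f i ≤ (∑ j ∈ t, f j) / s.card := by
  have hsum : ∑ i ∈ s, f i ≤ ∑ j ∈ t, f j := Finset.sum_le_sum_of_subset_of_nonneg hst hf
  have hmean : s.expect f ≤ (∑ j ∈ t, f j) / s.card := by
    rw [Finset.expect_eq_sum_div_card]
    gcongr
  exact Finset.exists_le_of_expect_le hs hmean

end Averaging

section Game

variable {n : ℕ} {S : Finset (Fin n)} {i : Fin n}

theorem gameA_eq_single_of_mem (hi : i ∈ S) : gameA S i = Pi.single i 1 := by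
  ext j
  simp [gameA, hi, Pi.single_apply, eq_comm]

theorem sum_gameA_mul_of_mem (hi : i ∈ S) (q : Fin n → ℝ) : ∑ j, gameA S i j * q j = q i := by
  rw [gameA_eq_single_of_mem hi]
  exact single_one_dotProduct i q

end Game

/-- **Maxmin bound for the game `A_S`.** For any `S ⊆ [n]` with `|S| = k` and
any column mixed strategy `q`, the best row response satisfies
`min_i ∑_j A_S[i,j]·q_j ≤ 1/k`. -/
theorem game_maxmin_bound (n k : ℕ) (hn : 0 < n) (hk1 : 1 ≤ k) (hkn : k ≤ n)
    (S : Finset (Fin n)) (hS : S.card = k)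
    (q : Fin n → ℝ) (hq0 : ∀ j, 0 ≤ q j) (hq1 : (∑ j, q j) = 1) :
    Finset.univ.inf' ⟨⟨0, hn⟩, Finset.mem_univ _⟩
      (fun i => ∑ j, gameA S i j * q j) ≤ 1 / k := by
  have hSne : S.Nonempty := Finset.card_pos.mp (hS ▸ hk1)
  obtain ⟨i, hiS, hqi⟩ : ∃ i ∈ S, q i ≤ 1 / k := by
    simpa only [hq1, hS] using
      exists_mem_le_sum_div_card hSne S.subset_univ fun j _ _ => hq0 j
  exact Finset.inf'_le_of_le _ (Finset.mem_univ i) ((sum_gameA_mul_of_mem hiS q).trans_le hqi)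
end

section
/- (Lemma 5.3, support-inclusion step.) Let p ∈ Δ_n and let S ⊆ {1,…,n} with |S| = k. If ℓ(p,S) < 2/k, then every index i with p_i ≥ 1/(2k) belongs to S. -/
section

variable {n : ℕ} {p : Fin n → ℝ} {S : Finset (Fin n)} {i j : Fin n}

theorem sum_mul_gameA_of_notMem (p : Fin n → ℝ) (hj : j ∉ S) :
    ∑ i, p i * gameA S i j = 4 * ∑ i ∈ Sᶜ, p i := by
  have hS : ∑ i ∈ S, p i * gameA S i j = 0 :=
    Finset.sum_eq_zero fun i hi => by simp [gameA, hi, ne_of_mem_of_not_mem hi hj]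
  have hSc : ∑ i ∈ Sᶜ, p i * gameA S i j = ∑ i ∈ Sᶜ, p i * 4 :=
    Finset.sum_congr rfl fun i hi => by simp [gameA, Finset.mem_compl.mp hi]
  rw [← Finset.sum_add_sum_compl S, hS, hSc, zero_add, ← Finset.sum_mul, mul_comm]

theorem sum_mul_gameA_le_gameLoss (hn : 0 < n) (p : Fin n → ℝ) (S : Finset (Fin n))
    (j : Fin n) : ∑ i, p i * gameA S i j ≤ gameLoss hn p S :=
  Finset.le_sup' (fun j => ∑ i, p i * gameA S i j) (Finset.mem_univ j)

theorem four_mul_le_gameLoss_of_notMem (hn : 0 < n) (hp : ∀ i ∉ S, 0 ≤ p i) (hi : i ∉ S) :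
    4 * p i ≤ gameLoss hn p S :=
  calc
    4 * p i ≤ 4 * ∑ a ∈ Sᶜ, p a := by
      gcongr
      exact Finset.single_le_sum (fun a ha => hp a (Finset.mem_compl.mp ha))
        (Finset.mem_compl.mpr hi)
    _ = ∑ a, p a * gameA S a i := (sum_mul_gameA_of_notMem p hi).symm
    _ ≤ gameLoss hn p S := sum_mul_gameA_le_gameLoss hn p S i

theorem game_loss_support_inclusion_general (hn : 0 < n) (hp : ∀ i ∉ S, 0 ≤ p i) {c : ℝ}
    (hloss : gameLoss hn p S < 4 * c) (hi : c ≤ p i) : i ∈ S := by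
  by_contra hiS
  have hle : 4 * p i ≤ gameLoss hn p S := four_mul_le_gameLoss_of_notMem hn hp hiS
  linarith

end

/-- **Lemma 5.3, support-inclusion step.** If `ℓ(p,S) < 2/k`, then every
index `i` with `p i ≥ 1/(2k)` belongs to `S`. -/
theorem game_loss_support_inclusion (n k : ℕ) (hn : 0 < n) (hk1 : 1 ≤ k) (hkn : k ≤ n)
    (p : Fin n → ℝ) (hp0 : ∀ i, 0 ≤ p i) (hp1 : (∑ i, p i) = 1)
    (S : Finset (Fin n)) (hS : S.card = k)
    (hloss : gameLoss hn p S < 2 / k) :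
    ∀ i : Fin n, p i ≥ 1 / (2 * k) → i ∈ S :=
  fun _ hi => game_loss_support_inclusion_general hn (fun a _ => hp0 a)
    (hloss.trans_eq (by ring)) hi
end

section
/- (Lemma 5.3, Case 2-1.) Let p ∈ Δ_n be such that p_i < 2/k for every i, and such that the set I := {i ∈ {1,…,n} : p_i ≥ 1/(2k)} has |I| < k/4. Then for every S ⊆ {1,…,n} with |S| = k, ℓ(p,S) ≥ 1/2. -/
theorem sum_le_card_nsmul_add_card_nsmul_sub {ι M : Type*} [AddCommGroup M] [PartialOrder M]
    [IsOrderedAddMonoid M] [DecidableEq ι] (s t : Finset ι) {f : ι → M} {a b : M} (hba : b ≤ a)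
    (ha : ∀ i ∈ s ∩ t, f i ≤ a) (hb : ∀ i ∈ s \ t, f i ≤ b) :
    ∑ i ∈ s, f i ≤ s.card • b + t.card • (a - b) :=
  calc ∑ i ∈ s, f i
      = ∑ i ∈ s ∩ t, f i + ∑ i ∈ s \ t, f i := (Finset.sum_inter_add_sum_sdiff s t f).symm
    _ ≤ (s ∩ t).card • a + (s \ t).card • b :=
        add_le_add (Finset.sum_le_card_nsmul _ _ _ ha) (Finset.sum_le_card_nsmul _ _ _ hb)
    _ = s.card • b + (s ∩ t).card • (a - b) := by
        rw [← Finset.card_inter_add_card_sdiff s t, add_nsmul, nsmul_sub]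
        abel
    _ ≤ s.card • b + t.card • (a - b) := by
        gcongr _ + ?_
        exact nsmul_le_nsmul_left (sub_nonneg.mpr hba)
          (Finset.card_le_card Finset.inter_subset_right)

theorem gameA_of_column_notMem {n : ℕ} {S : Finset (Fin n)} {j : Fin n} (hj : j ∉ S)
    (i : Fin n) : gameA S i j = if i ∈ Sᶜ then 4 else 0 := by
  by_cases hi : i ∈ S
  · simp [gameA, hi, ne_of_mem_of_not_mem hi hj]
  · simp [gameA, hi]

theorem sum_mul_gameA_of_column_notMem {n : ℕ} (p : Fin n → ℝ) {S : Finset (Fin n)} {j : Fin n}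
    (hj : j ∉ S) : ∑ i, p i * gameA S i j = 4 * ∑ i ∈ Sᶜ, p i := by
  simp only [gameA_of_column_notMem hj, mul_ite, mul_zero, Finset.sum_ite_mem, Finset.univ_inter]
  rw [← Finset.sum_mul, mul_comm]

theorem four_mul_sum_compl_le_gameLoss {n : ℕ} (hn : 0 < n) (p : Fin n → ℝ)
    {S : Finset (Fin n)} {j : Fin n} (hj : j ∉ S) : 4 * ∑ i ∈ Sᶜ, p i ≤ gameLoss hn p S :=
  (sum_mul_gameA_of_column_notMem p hj).symm.trans_le
    (Finset.le_sup' (fun j => ∑ i, p i * gameA S i j) (Finset.mem_univ j))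

theorem sum_lt_seven_eighths {ι : Type*} {p : ι → ℝ} {S I : Finset ι}
    (hI : ∀ i ∈ S, i ∈ I → p i ≤ 2 / S.card) (hIc : ∀ i ∈ S, i ∉ I → p i ≤ 1 / (2 * S.card))
    (hIcard : (I.card : ℝ) < S.card / 4) : ∑ i ∈ S, p i < 7 / 8 := by
  classical
  have hS : (0 : ℝ) < S.card := by linarith [I.card.cast_nonneg (α := ℝ)]
  have hgap : 2 / (S.card : ℝ) - 1 / (2 * S.card) = 3 / (2 * S.card) := by
    field_simp
    norm_num
  have hle : 1 / (2 * (S.card : ℝ)) ≤ 2 / S.card := by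
    rw [← sub_nonneg, hgap]
    positivity
  calc ∑ i ∈ S, p i
      ≤ S.card • (1 / (2 * (S.card : ℝ))) + I.card • (2 / (S.card : ℝ) - 1 / (2 * S.card)) :=
        sum_le_card_nsmul_add_card_nsmul_sub S I hle
          (fun i hi => hI i (Finset.mem_inter.mp hi).1 (Finset.mem_inter.mp hi).2)
          (fun i hi => hIc i (Finset.mem_sdiff.mp hi).1 (Finset.mem_sdiff.mp hi).2)
    _ = 1 / 2 + I.card * (3 / (2 * (S.card : ℝ))) := by
        rw [hgap, nsmul_eq_mul, nsmul_eq_mul]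
        field_simp
    _ < 1 / 2 + S.card / 4 * (3 / (2 * (S.card : ℝ))) := by gcongr
    _ = 7 / 8 := by
        field_simp
        norm_num

theorem game_loss_case_two_one_general {n : ℕ} (hn : 0 < n) {p : Fin n → ℝ}
    (hp : ∑ i, p i = 1) {S I : Finset (Fin n)} (hI : ∀ i ∈ S, i ∈ I → p i ≤ 2 / S.card)
    (hIc : ∀ i ∈ S, i ∉ I → p i ≤ 1 / (2 * S.card)) (hIcard : (I.card : ℝ) < S.card / 4) :
    1 / 2 < gameLoss hn p S := by
  have hmass : ∑ i ∈ S, p i < 7 / 8 := sum_lt_seven_eighths hI hIc hIcard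
  have hsplit : ∑ i ∈ S, p i + ∑ i ∈ Sᶜ, p i = 1 := (Finset.sum_add_sum_compl S p).trans hp
  obtain ⟨j, hj⟩ : Sᶜ.Nonempty := Finset.nonempty_of_sum_ne_zero (f := p) (by linarith)
  calc (1 / 2 : ℝ) < 4 * ∑ i ∈ Sᶜ, p i := by linarith
    _ ≤ gameLoss hn p S := four_mul_sum_compl_le_gameLoss hn p (Finset.mem_compl.mp hj)

/-- **Lemma 5.3, Case 2-1.** Suppose every coordinate of the probability
vector `p` is below `2/k`, and the set `I = {i : p i ≥ 1/(2k)}` has fewer than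
`k/4` elements. Then `ℓ(p,S) ≥ 1/2` for every `S` of size `k`. -/
theorem game_loss_case_two_one (n k : ℕ) (hn : 0 < n) (hk1 : 1 ≤ k) (hkn : k ≤ n)
    (p : Fin n → ℝ) (hp0 : ∀ i, 0 ≤ p i) (hp1 : (∑ i, p i) = 1)
    (hsmall : ∀ i, p i < 2 / k)
    (I : Finset (Fin n)) (hI : ∀ i, i ∈ I ↔ p i ≥ 1 / (2 * k))
    (hIcard : (I.card : ℝ) < k / 4) :
    ∀ S : Finset (Fin n), S.card = k → gameLoss hn p S ≥ 1 / 2 := by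
  rintro S rfl
  exact (game_loss_case_two_one_general hn hp1 (fun i _ _ => (hsmall i).le)
    (fun i _ hi => (not_le.mp (mt (hI i).mpr hi)).le) hIcard).le
end

section
/- (Deterministic core of the lower-bound counting argument, Theorem 5.1.) Assume k ≥ 4, k is divisible by 4, and n ≥ 3k/2. Let P be a finite set of probability vectors in Δ_n. Then the number of subsets S ⊆ {1,…,n} with |S| = k for which there exists some p ∈ P with ℓ(p,S) < 2/k is at most |P| · C(n, 3k/4). -/
open Finset

theorem choose_le_choose_of_add_le_add {m n k l : ℕ} (hkl : k ≤ l) (h : m + l ≤ n + k) :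
    m.choose k ≤ n.choose l := by
  obtain ⟨d, rfl⟩ := Nat.exists_eq_add_of_le hkl
  have hdiag : m.choose k ≤ (m + d).choose (k + d) := by
    clear h hkl
    induction d with
    | zero => rfl
    | succ d ih => exact ih.trans (Nat.choose_succ_succ _ _ ▸ Nat.le_add_right _ _)
  exact hdiag.trans (Nat.choose_le_choose _ (by lia))

section HeavyCoords

variable {ι : Type*} [Fintype ι]

/-- The set of coordinates at which the weight vector `p` is at least `τ`; a strategy of small loss
on `S` reveals part of `S` through it. -/
noncomputable def heavyCoords (τ : ℝ) (p : ι → ℝ) : Finset ι := {i | τ ≤ p i}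

theorem mem_heavyCoords {τ : ℝ} {p : ι → ℝ} {i : ι} : i ∈ heavyCoords τ p ↔ τ ≤ p i := by
  simp [heavyCoords]

theorem sum_le_of_heavyCoords_subset {τ M : ℝ} {p : ι → ℝ} {S : Finset ι}
    (hsub : heavyCoords τ p ⊆ S) (hM : ∀ i ∈ heavyCoords τ p, p i ≤ M) :
    ∑ i ∈ S, p i ≤ #(heavyCoords τ p) * M + (#S - #(heavyCoords τ p)) * τ := by
  classical
  have hheavy : ∑ i ∈ heavyCoords τ p, p i ≤ #(heavyCoords τ p) * M := by
    simpa only [nsmul_eq_mul] using sum_le_card_nsmul _ _ _ hM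
  have hlight : ∑ i ∈ S \ heavyCoords τ p, p i ≤ (#S - #(heavyCoords τ p)) * τ := by
    rw [← cast_card_sdiff hsub, ← nsmul_eq_mul]
    refine sum_le_card_nsmul _ _ _ fun i hi => ?_
    exact (not_le.mp (mem_heavyCoords.not.mp (mem_sdiff.mp hi).2)).le
  linarith [sum_sdiff (f := p) hsub]

end HeavyCoords

section GameLoss

variable {n : ℕ} {p : Fin n → ℝ} {S : Finset (Fin n)}

theorem sum_mul_gameA (p : Fin n → ℝ) (S : Finset (Fin n)) (j : Fin n) :
    ∑ i, p i * gameA S i j = 4 * ∑ i ∈ Sᶜ, p i + if j ∈ S then p j else 0 := by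
  have hout : ∑ i ∈ Sᶜ, p i * gameA S i j = 4 * ∑ i ∈ Sᶜ, p i := by
    rw [mul_sum]
    refine sum_congr rfl fun i hi => ?_
    rw [gameA, if_neg (mem_compl.mp hi), mul_comm]
  have hin : ∑ i ∈ S, p i * gameA S i j = if j ∈ S then p j else 0 := by
    rw [← sum_ite_eq' S j p]
    refine sum_congr rfl fun i hi => ?_
    rw [gameA, if_pos hi, mul_ite, mul_one, mul_zero]
  rw [← sum_compl_add_sum S, hout, hin]

theorem gameLoss_lt_iff (hn : 0 < n) {t : ℝ} :
    gameLoss hn p S < t ↔ ∀ j, 4 * ∑ i ∈ Sᶜ, p i + (if j ∈ S then p j else 0) < t := by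
  simp only [gameLoss, sum_mul_gameA]
  exact (sup'_lt_iff _).trans (by simp only [mem_univ, true_imp_iff])

variable {hn : 0 < n} {τ : ℝ}

theorem sum_compl_lt_of_gameLoss_lt (hp : ∀ i, 0 ≤ p i) (h : gameLoss hn p S < 4 * τ) :
    ∑ i ∈ Sᶜ, p i < τ := by
  have hcol := (gameLoss_lt_iff hn).mp h ⟨0, hn⟩
  have hnonneg : 0 ≤ if (⟨0, hn⟩ : Fin n) ∈ S then p ⟨0, hn⟩ else 0 :=
    ite_nonneg (hp _) le_rfl
  linarith

theorem apply_lt_of_gameLoss_lt {t : ℝ} (hp : ∀ i, 0 ≤ p i) (h : gameLoss hn p S < t)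
    {j : Fin n} (hj : j ∈ S) : p j < t := by
  have hcol := (gameLoss_lt_iff hn).mp h j
  rw [if_pos hj] at hcol
  linarith [sum_nonneg fun i (_ : i ∈ Sᶜ) => hp i]

theorem heavyCoords_subset_of_gameLoss_lt (hp : ∀ i, 0 ≤ p i) (h : gameLoss hn p S < 4 * τ) :
    heavyCoords τ p ⊆ S := by
  intro i hi
  by_contra hiS
  have hle : p i ≤ ∑ i ∈ Sᶜ, p i := single_le_sum (fun i _ => hp i) (mem_compl.mpr hiS)
  exact (mem_heavyCoords.mp hi).not_gt (hle.trans_lt (sum_compl_lt_of_gameLoss_lt hp h))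

theorem sum_lt_of_gameLoss_lt (hp : ∀ i, 0 ≤ p i) (h : gameLoss hn p S < 4 * τ) :
    ∑ i, p i < (3 * #(heavyCoords τ p) + #S + 1) * τ := by
  have hsub := heavyCoords_subset_of_gameLoss_lt hp h
  calc
    ∑ i, p i = ∑ i ∈ Sᶜ, p i + ∑ i ∈ S, p i := (sum_compl_add_sum S p).symm
    _ < τ + (#(heavyCoords τ p) * (4 * τ) + (#S - #(heavyCoords τ p)) * τ) :=
      add_lt_add_of_lt_of_le (sum_compl_lt_of_gameLoss_lt hp h)
        (sum_le_of_heavyCoords_subset hsub fun i hi =>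
          (apply_lt_of_gameLoss_lt hp h (hsub hi)).le)
    _ = (3 * #(heavyCoords τ p) + #S + 1) * τ := by ring

theorem card_le_three_mul_card_heavyCoords (hp : ∀ i, 0 ≤ p i)
    (hτ : 2 * #S * τ ≤ ∑ i, p i) (h : gameLoss hn p S < 4 * τ) :
    #S ≤ 3 * #(heavyCoords τ p) := by
  have hτ0 : 0 ≤ τ :=
    (sum_nonneg fun i _ => hp i).trans (sum_compl_lt_of_gameLoss_lt hp h).le
  have hlt : (2 * #S : ℝ) < 3 * #(heavyCoords τ p) + #S + 1 :=
    lt_of_mul_lt_mul_right (hτ.trans_lt (sum_lt_of_gameLoss_lt hp h)) hτ0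
  norm_cast at hlt
  lia

theorem card_filter_gameLoss_lt_le (hn : 0 < n) {k : ℕ} (hk : 0 < k) (hp : ∀ i, 0 ≤ p i)
    (hsum : ∑ i, p i = 1) :
    #{S : Finset (Fin n) | #S = k ∧ gameLoss hn p S < 2 / k} ≤
      (n - (k + 2) / 3).choose (2 * k / 3) := by
  set F : Finset (Finset (Fin n)) := {S | #S = k ∧ gameLoss hn p S < 2 / k}
  set τ : ℝ := 1 / (2 * k)
  have hthreshold : (2 : ℝ) / k = 4 * τ := by ring
  have hmass : 2 * k * τ = ∑ i, p i := by rw [hsum, mul_one_div_cancel (by positivity)]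
  set H := heavyCoords τ p
  have heavy_of_mem : ∀ S ∈ F, #S = k ∧ H ⊆ S ∧ k ≤ 3 * #H := by
    intro S hS
    obtain ⟨hcard, hloss⟩ := (mem_filter_univ S).mp hS
    rw [hthreshold] at hloss
    have hthird := card_le_three_mul_card_heavyCoords hp (hcard ▸ hmass.le) hloss
    exact ⟨hcard, heavyCoords_subset_of_gameLoss_lt hp hloss, hcard ▸ hthird⟩
  obtain hempty | ⟨S₀, hS₀⟩ := F.eq_empty_or_nonempty
  · simp [hempty]
  obtain ⟨hcard, hsub, hthird⟩ := heavy_of_mem S₀ hS₀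
  have hHk : #H ≤ k := hcard ▸ card_le_card hsub
  have hkn : k ≤ n := hcard ▸ card_finset_fin_le S₀
  calc
    #F ≤ #{S ∈ powersetCard k univ | H ⊆ S} := card_le_card fun S hS => by
      simpa using And.intro (heavy_of_mem S hS).1 (heavy_of_mem S hS).2.1
    _ = (n - #H).choose (k - #H) := by
      rw [card_filter_powersetCard_subset H univ k (subset_univ H) hHk, card_fin]
    _ ≤ (n - (k + 2) / 3).choose (2 * k / 3) :=
      choose_le_choose_of_add_le_add (by lia) (by lia)

end GameLoss

theorem game_loss_union_covering_general (n k : ℕ) (hn : 0 < n) (hk : 0 < k)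
    (P : Finset (Fin n → ℝ))
    (hP : ∀ p ∈ P, (∀ i, 0 ≤ p i) ∧ (∑ i, p i) = 1) :
    {S : Finset (Fin n) | S.card = k ∧ ∃ p ∈ P, gameLoss hn p S < 2 / k}.ncard ≤
      P.card * (n - (k + 2) / 3).choose (2 * k / 3) := by
  classical
  have hunion : {S : Finset (Fin n) | #S = k ∧ ∃ p ∈ P, gameLoss hn p S < 2 / k} =
      P.biUnion fun p => {S | #S = k ∧ gameLoss hn p S < 2 / k} := by
    ext S
    simp only [Set.mem_ofPred_eq, mem_coe, mem_biUnion, mem_filter_univ]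
    tauto
  rw [hunion, Set.ncard_coe_finset]
  exact card_biUnion_le_card_mul _ _ _ fun p hp =>
    card_filter_gameLoss_lt_le hn hk (hP p hp).1 (hP p hp).2

/-- **Deterministic core of the lower-bound counting argument (Theorem 5.1).**
Assume `k ≥ 4`, `4 ∣ k` and `n ≥ 3k/2`. For any finite set `P` of probability
vectors, the number of size-`k` subsets `S ⊆ [n]` for which some `p ∈ P` has
`ℓ(p,S) < 2/k` is at most `|P| · C(n, 3k/4)`. -/
theorem game_loss_union_covering (n k : ℕ) (hn : 0 < n) (hk4 : 4 ≤ k) (hkdvd : 4 ∣ k)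
    (hkn : k ≤ n) (h32 : 3 * k ≤ 2 * n)
    (P : Finset (Fin n → ℝ))
    (hP : ∀ p ∈ P, (∀ i, 0 ≤ p i) ∧ (∑ i, p i) = 1) :
    {S : Finset (Fin n) | S.card = k ∧ ∃ p ∈ P, gameLoss hn p S < 2 / k}.ncard ≤
      P.card * n.choose (3 * k / 4) :=
  (game_loss_union_covering_general n k hn (by lia) P hP).trans
    (Nat.mul_le_mul_left _ (choose_le_choose_of_add_le_add (by lia) (by lia)))
end
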